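/- Exchangeable-pair regression identity for W_3 (from the proof of Proposition 2): for every k ∈ ℝ^N with Σ_s k_s = B, D W_3(k) = −(1/B)·W_3(k). -/

import Mathlib

open Finset

/-- The multinomial moment `m_{s,t} = E[k_s k_t] = B(B−1)/N² + 1{s=t}·B/N`. -/
noncomputable def mMoment (B N : ℕ) (s t : Fin N) : ℝ :=
  (B : ℝ) * ((B : ℝ) - 1) / ((N : ℝ)) ^ 2 + if s = t then (B : ℝ) / (N : ℝ) else 0

/-- `W_1(k) := (1/B²) Σ_{s,t} (k_s k_t − m_{s,t}) h(s,t)`. -/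
noncomputable def W1 (B N : ℕ) (h : Fin N → Fin N → ℝ) (k : Fin N → ℝ) : ℝ :=
  (((B : ℝ)) ^ 2)⁻¹ * ∑ s : Fin N, ∑ t : Fin N, (k s * k t - mMoment B N s t) * h s t

/-- `W_2(k) := (1/B²) Σ_{s,t} (k_s − B/N) h(s,t)`. -/
noncomputable def W2 (B N : ℕ) (h : Fin N → Fin N → ℝ) (k : Fin N → ℝ) : ℝ :=
  (((B : ℝ)) ^ 2)⁻¹ * ∑ s : Fin N, ∑ t : Fin N, (k s - (B : ℝ) / (N : ℝ)) * h s t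

/-- `W_3(k) := (1/B²) Σ_s (k_s − B/N) h(s,s)`. -/
noncomputable def W3 (B N : ℕ) (h : Fin N → Fin N → ℝ) (k : Fin N → ℝ) : ℝ :=
  (((B : ℝ)) ^ 2)⁻¹ * ∑ s : Fin N, (k s - (B : ℝ) / (N : ℝ)) * h s s

/-- `k^{i→j} := k − e_i + e_j`. -/
def kmove {N : ℕ} (k : Fin N → ℝ) (i j : Fin N) : Fin N → ℝ :=
  fun t => k t - (if t = i then 1 else 0) + (if t = j then 1 else 0)

/-- The exchangeable-pair average
`D W(k) := Σ_{i,j} (k_i/(BN))·(W(k^{i→j}) − W(k))`. -/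
noncomputable def Dop (B N : ℕ) (W : (Fin N → ℝ) → ℝ) (k : Fin N → ℝ) : ℝ :=
  ∑ i : Fin N, ∑ j : Fin N, k i / ((B : ℝ) * (N : ℝ)) * (W (kmove k i j) - W k)

/-!
`W_3` is the linear statistic `Σ_s (k_s − B/N) f_s` with `f_s = h(s,s)/B²`, so moving one index
from `i` to `j` changes it by `f_j − f_i`. The removed index has law `k/B` and the inserted one is
uniform, so the average change is the uniform mean of `f` minus its mean under `k/B`, which is
`−1/B` times the centered statistic itself.
-/

/-- The linear statistic `Σ_s (k_s − B/N) f_s` of the counts `k`, centered at the multinomial mean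
`B/N` of each count; `W_2` and `W_3` are of this form. The weights `f` absorb any scalar factor. -/
noncomputable def centeredSum (B N : ℕ) (f k : Fin N → ℝ) : ℝ :=
  ∑ s : Fin N, (k s - (B : ℝ) / (N : ℝ)) * f s

theorem W3_eq_centeredSum (B N : ℕ) (h : Fin N → Fin N → ℝ) :
    W3 B N h = centeredSum B N fun s => ((B : ℝ) ^ 2)⁻¹ * h s s := by
  funext k
  simp only [W3, centeredSum, mul_sum, mul_left_comm]

section Drift

variable {N : ℕ} (B : ℕ) (f k : Fin N → ℝ)

theorem centeredSum_eq_sum_mul_sub :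
    centeredSum B N f k = ∑ s, k s * f s - (B : ℝ) / N * ∑ s, f s := by
  simp only [centeredSum, sub_mul, sum_sub_distrib, mul_sum]

theorem kmove_eq_sub_single_add_single (i j : Fin N) :
    kmove k i j = k - Pi.single i 1 + Pi.single j 1 := by
  ext t
  simp only [kmove, Pi.add_apply, Pi.sub_apply, Pi.single_apply]

theorem sum_kmove_mul (i j : Fin N) :
    ∑ s, kmove k i j s * f s = ∑ s, k s * f s - f i + f j := by
  change kmove k i j ⬝ᵥ f = k ⬝ᵥ f - f i + f j
  rw [kmove_eq_sub_single_add_single, add_dotProduct, sub_dotProduct, single_one_dotProduct,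
    single_one_dotProduct]

theorem centeredSum_kmove_sub (i j : Fin N) :
    centeredSum B N f (kmove k i j) - centeredSum B N f k = f j - f i := by
  rw [centeredSum_eq_sum_mul_sub, centeredSum_eq_sum_mul_sub, sum_kmove_mul]
  ring

variable {B f k} {W : (Fin N → ℝ) → ℝ}

theorem Dop_eq_sum_of_increment (hW : ∀ i j, W (kmove k i j) - W k = f j - f i) :
    Dop B N W k = ∑ i, k i / (B : ℝ) * ((∑ j, f j) / N - f i) := by
  simp only [Dop, hW]
  refine sum_congr rfl fun i _ => ?_
  have hN : (N : ℝ) ≠ 0 := Nat.cast_ne_zero.2 i.pos.ne'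
  have sum_increment : ∑ j, (f j - f i) = ∑ j, f j - N * f i := by
    rw [sum_sub_distrib, sum_const, card_univ, Fintype.card_fin, nsmul_eq_mul]
  rw [← mul_sum, sum_increment]
  field_simp

theorem Dop_eq_mean_sub_mean_of_increment (hB : 0 < B) (hk : ∑ s, k s = (B : ℝ))
    (hW : ∀ i j, W (kmove k i j) - W k = f j - f i) :
    Dop B N W k = (∑ j, f j) / N - (∑ i, k i * f i) / B := by
  have hB' : (B : ℝ) ≠ 0 := Nat.cast_ne_zero.2 hB.ne'
  calc Dop B N W k
      = ∑ i, k i / (B : ℝ) * ((∑ j, f j) / N - f i) := Dop_eq_sum_of_increment hW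
    _ = (∑ i, k i) / B * ((∑ j, f j) / N) - (∑ i, k i * f i) / B := by
        simp only [mul_sub, sum_sub_distrib, ← sum_mul, ← sum_div, div_mul_eq_mul_div]
    _ = (∑ j, f j) / N - (∑ i, k i * f i) / B := by rw [hk, div_self hB', one_mul]

end Drift

theorem exchangeable_pair_W3_general {B N : ℕ} (hB : 0 < B) (f k : Fin N → ℝ)
    (hk : ∑ s : Fin N, k s = (B : ℝ)) :
    Dop B N (centeredSum B N f) k = -((B : ℝ))⁻¹ * centeredSum B N f k := by
  have hB' : (B : ℝ) ≠ 0 := Nat.cast_ne_zero.2 hB.ne'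
  rw [Dop_eq_mean_sub_mean_of_increment hB hk (centeredSum_kmove_sub B f k),
    centeredSum_eq_sum_mul_sub]
  field_simp
  ring

/-- exchangeable-pair regression identity for `W_3`: for every `k ∈ ℝ^N` with
`Σ_s k_s = B`, `D W_3(k) = −(1/B)·W_3(k)`. -/
theorem exchangeable_pair_W3 {B N : ℕ} (hB : 0 < B) (hN : 0 < N)
    (h : Fin N → Fin N → ℝ) (hsymm : ∀ s t, h s t = h t s)
    (k : Fin N → ℝ) (hk : ∑ s : Fin N, k s = (B : ℝ)) :
    Dop B N (W3 B N h) k = -((B : ℝ))⁻¹ * W3 B N h k := by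
  rw [W3_eq_centeredSum]
  exact exchangeable_pair_W3_general hB _ k hk
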